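/- arXiv:1605.09172 — 2 statements merged into one kernel-verified Lean document; each statement's English description precedes it below -/
import Mathlib

section
/- Let λ be a partition of n, let μ_j(λ) be the multiplicity of part j in λ, and let ℓ(λ) be the number of parts. If gcd of all the μ_j(λ) together with m is 1 (in particular if gcd(m,n)=1), then the rational function (1/[m]_q)·[m choose μ_1(λ), μ_2(λ), …]_q = ([m−1]_q [m−2]_q ⋯ [m−ℓ(λ)+1]_q)/(∏_j [μ_j(λ)]!_q) is a polynomial in q with nonnegative integer coefficients. -/
/-!
Write `[a]` for the `q`-integer and `f` for the multinomial `[m choose μ]_q`.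

*Divisibility.* Each `[μ_j] f` is divisible by `[m]`, the quotient being the multinomial coefficient
with `m` and `μ_j` lowered by one (`qint_dvd_qmultinom`). The set of `a` with `[m] ∣ [a] f` contains
`m` and is closed under gcd by the Euclidean algorithm (`dvd_qint_gcd`), so it contains `1`.

*Nonnegativity.* The multinomial is a product of Gaussian binomials, and the Gaussian binomial
`[N choose k]_q` is, up to a power of `q`, the character of the `k`-th exterior power of the
`N`-dimensional irreducible representation of `sl₂`. In a suitable basis the lowering operator is
the transpose of the raising operator `E`, and `Eᵀ E - E Eᵀ` is diagonal with positive entries below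
the middle weight and negative ones above it. Hence `E` is injective in the lower half and `Eᵀ` in
the upper half, so the coefficients of `f` increase up to the middle and decrease after it
(`IsChar.unimodal`). If `f = [m] Q`, then `(1 - q) f = (1 - q^m) Q`; solving this recurrence from
both ends gives `Q ≥ 0` (`coeff_nonneg_of_mul_qint`).
-/

open Finset Polynomial

/-- The Gaussian binomial coefficient `[n choose k]_q` as a polynomial in `q`. -/
noncomputable def qbinom : ℕ → ℕ → Polynomial ℤ
  | _, 0 => 1
  | 0, _ + 1 => 0
  | n + 1, k + 1 => qbinom n k + Polynomial.X ^ (k + 1) * qbinom n (k + 1)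

/-- The q-multinomial coefficient `[N choose ν]_q` as a polynomial in `q`. -/
noncomputable def qmultinom (N : ℕ) : List ℕ → Polynomial ℤ
  | [] => 1
  | a :: l => qbinom N a * qmultinom (N - a) l

open scoped Matrix

/-! ### Absorption identities and divisibility by `[m]_q` -/

lemma qbinom_zero_right (n : ℕ) : qbinom n 0 = 1 := by cases n <;> rfl

lemma qbinom_zero_succ (k : ℕ) : qbinom 0 (k + 1) = 0 := rfl

lemma qbinom_succ_succ (n k : ℕ) :
    qbinom (n + 1) (k + 1) = qbinom n k + X ^ (k + 1) * qbinom n (k + 1) := rfl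

lemma qbinom_eq_zero {n k : ℕ} (h : n < k) : qbinom n k = 0 := by
  induction n generalizing k with
  | zero => obtain ⟨k, rfl⟩ := Nat.exists_eq_succ_of_ne_zero h.ne'; rfl
  | succ n ih =>
    obtain ⟨k, rfl⟩ := Nat.exists_eq_succ_of_ne_zero (Nat.ne_zero_of_lt h)
    rw [Nat.succ_eq_add_one, qbinom_succ_succ, ih (by omega), ih (by omega)]; simp

/-- `[k+1]_q [n choose k+1]_q = [n-k]_q [n choose k]_q`, multiplied by `q^k (q - 1)` so that it
holds for all `n` and `k` without truncated subtraction. -/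
lemma qbinom_ratio (n k : ℕ) :
    X ^ k * (X ^ (k + 1) - 1) * qbinom n (k + 1) = (X ^ n - X ^ k) * qbinom n k := by
  induction n generalizing k with
  | zero =>
    cases k with
    | zero => simp [qbinom_zero_succ]
    | succ k => simp [qbinom_zero_succ]
  | succ n ih =>
    cases k with
    | zero =>
      have h := ih 0
      simp only [qbinom_succ_succ, qbinom_zero_right] at *
      linear_combination X * h
    | succ k =>
      have h1 := ih k
      have h2 := ih (k + 1)
      simp only [qbinom_succ_succ]
      linear_combination X ^ (k + 2) * h2 + X * h1

lemma qbinom_absorb (n k : ℕ) :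
    (X ^ (k + 1) - 1) * qbinom (n + 1) (k + 1) = (X ^ (n + 1) - 1) * qbinom n k := by
  have hX : (X : ℤ[X]) ^ k ≠ 0 := pow_ne_zero _ X_ne_zero
  apply mul_left_cancel₀ hX
  rw [qbinom_succ_succ]
  linear_combination X ^ (k + 1) * qbinom_ratio n k

lemma qbinom_absorb' {n k : ℕ} (h : k ≤ n + 1) :
    (X ^ (n + 1 - k) - 1) * qbinom (n + 1) k = (X ^ (n + 1) - 1) * qbinom n k := by
  have hX : (X : ℤ[X]) ^ k ≠ 0 := pow_ne_zero _ X_ne_zero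
  apply mul_left_cancel₀ hX
  have e : (X : ℤ[X]) ^ (n + 1) = X ^ k * X ^ (n + 1 - k) := by
    rw [← pow_add]; congr 1; omega
  have h1 := qbinom_ratio (n + 1) k
  have h2 := qbinom_absorb n k
  linear_combination X ^ k * h2 - h1 - qbinom (n + 1) k * e

/-- The `q`-integer `[n]_q = 1 + q + ⋯ + q^(n-1)`. -/
noncomputable def qint (n : ℕ) : ℤ[X] := ∑ i ∈ range n, X ^ i

lemma qint_mul (n : ℕ) : qint n * (X - 1) = X ^ n - 1 := geom_sum_mul _ _

lemma X_sub_one_ne : (X - 1 : ℤ[X]) ≠ 0 := by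
  simpa using X_sub_C_ne_zero (1 : ℤ)

lemma qint_dvd_qbinom (N a : ℕ) : qint N ∣ qint a * qbinom N a := by
  cases a with
  | zero => simp [qint]
  | succ a =>
    cases N with
    | zero => simp [qbinom_zero_succ]
    | succ N =>
      refine ⟨qbinom N a, mul_left_cancel₀ X_sub_one_ne ?_⟩
      linear_combination qbinom_absorb N a + qbinom (N + 1) (a + 1) * qint_mul (a + 1)
        - qbinom N a * qint_mul (N + 1)

lemma qint_dvd_qbinom' (N a : ℕ) : qint N ∣ qint (N - a) * qbinom N a := by
  rcases lt_or_ge N a with h | h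
  · simp [qbinom_eq_zero h]
  · cases N with
    | zero => simp [qint]
    | succ N =>
      refine ⟨qbinom N a, mul_left_cancel₀ X_sub_one_ne ?_⟩
      linear_combination qbinom_absorb' h + qbinom (N + 1) a * qint_mul (N + 1 - a)
        - qbinom N a * qint_mul (N + 1)

/-- For every positive entry `a` of `ν`, the quotient `[a]_q [N choose ν]_q / [N]_q` is the multinomial
coefficient with `N` and that entry lowered by one, hence a polynomial. -/
lemma qint_dvd_qmultinom (l : List ℕ) (N a : ℕ) (ha : a ∈ l) :
    qint N ∣ qint a * qmultinom N l := by
  induction l generalizing N with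
  | nil => simp at ha
  | cons b l ih =>
    rw [qmultinom]
    rcases List.mem_cons.1 ha with rfl | h
    · rw [← mul_assoc]; exact (qint_dvd_qbinom N a).mul_right _
    · obtain ⟨c, hc⟩ := ih (N - b) h
      have : qint a * (qbinom N b * qmultinom (N - b) l) = qint (N - b) * qbinom N b * c := by
        linear_combination qbinom N b * hc
      rw [this]; exact (qint_dvd_qbinom' N b).mul_right _

lemma qint_add (a b : ℕ) : qint (a + b) = qint a + X ^ a * qint b := by
  simp [qint, sum_range_add, mul_sum, pow_add]

/-- The Euclidean algorithm on `q`-integers: `{a : g ∣ [a]_q f}` is closed under `gcd`. -/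
lemma dvd_qint_gcd {g f : ℤ[X]} (a b : ℕ) (ha : g ∣ qint a * f) (hb : g ∣ qint b * f) :
    g ∣ qint (Nat.gcd a b) * f := by
  have step : ∀ c d : ℕ, g ∣ qint c * f → g ∣ qint (c * d) * f := by
    intro c d hc
    induction d with
    | zero => simp [qint]
    | succ d ih =>
      rw [Nat.mul_succ, qint_add, add_mul, mul_assoc]
      exact dvd_add ih (hc.mul_left _)
  induction a, b using Nat.gcd.induction with
  | H0 n => simpa using hb
  | H1 m n hm ih =>
    rw [Nat.gcd_rec]
    refine ih ?_ ha
    have e := Nat.mod_add_div n m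
    rw [← e, qint_add, add_mul, mul_assoc] at hb
    exact (dvd_add_left ((step m (n / m) ha).mul_left _)).1 hb

lemma dvd_qint_finset_gcd {g f : ℤ[X]} (s : Finset ℕ) (μ : ℕ → ℕ)
    (h : ∀ j ∈ s, g ∣ qint (μ j) * f) : g ∣ qint (s.gcd μ) * f := by
  induction s using Finset.induction with
  | empty => simp [qint]
  | insert j s hj ih =>
    rw [Finset.gcd_insert]
    exact dvd_qint_gcd _ _ (h j (by simp)) (ih fun i hi => h i (by simp [hi]))

/-! ### Graded `sl₂` structures -/

/-- `f` (up to a power of `q`) is the generating function of a grading `wt` of the standard basis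
of `ℝ^ι` for which some matrix `E` of degree `1` satisfies `[Eᵀ, E] = diag(c - 2 wt)`. Thus `E` and
its transpose generate an action of `sl₂` having the standard basis as weight vectors. -/
def IsChar (f : ℤ[X]) : Prop :=
  ∃ (ι : Type) (_ : Fintype ι) (_ : DecidableEq ι) (wt : ι → ℕ) (E : Matrix ι ι ℝ) (c : ℝ) (s : ℕ),
    (∀ i j, E i j ≠ 0 → wt i = wt j + 1) ∧
    Eᵀ * E - E * Eᵀ = Matrix.diagonal (fun i => c - 2 * (wt i : ℝ)) ∧
    X ^ s * f = ∑ i, X ^ wt i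

/-- If `[Aᵀ, A]` is diagonal and positive on the coordinates in `p`, then `A` is injective on
vectors supported on `p`, because `‖A v‖² = ‖Aᵀ v‖² + ∑ D i (v i)²`. -/
lemma card_le_of_commutator {ι : Type} [Fintype ι] [DecidableEq ι] (A : Matrix ι ι ℝ) (D : ι → ℝ)
    (hA : Aᵀ * A - A * Aᵀ = Matrix.diagonal D) (p q : ι → Prop) [DecidablePred p] [DecidablePred q]
    (hp : ∀ i, p i → 0 < D i) (hpq : ∀ i j, A i j ≠ 0 → p j → q i) :
    #{i | p i} ≤ #{i | q i} := by
  let B : Matrix {i // q i} {i // p i} ℝ := A.submatrix Subtype.val Subtype.val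
  have inj : Function.Injective B.mulVecLin := by
    rw [← LinearMap.ker_eq_bot, LinearMap.ker_eq_bot']
    intro v hv
    -- `w` is the extension of `v` by zero.
    set w : ι → ℝ := fun i => if h : p i then v ⟨i, h⟩ else 0 with hw
    have hAw : A *ᵥ w = 0 := by
      ext i
      by_cases hi : q i
      · have h1 := congrFun hv ⟨i, hi⟩
        simp only [Matrix.mulVecLin_apply, Matrix.mulVec, dotProduct, B, Matrix.submatrix_apply,
          Pi.zero_apply] at h1 ⊢
        rw [← h1, ← Finset.sum_filter_of_ne (p := p) (fun j _ hj => ?_),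
          Finset.sum_subtype {j | p j} (p := p) (by simp)]
        · exact Finset.sum_congr rfl fun j _ => by simp [hw, j.2]
        · by_contra h
          simp [hw, h] at hj
      · simp only [Matrix.mulVec, dotProduct, Pi.zero_apply]
        refine Finset.sum_eq_zero fun j _ => ?_
        by_cases hj : p j
        · have : A i j = 0 := by
            by_contra h
            exact hi (hpq i j h hj)
          simp [this]
        · simp [hw, hj]
    have h0 : w ⬝ᵥ ((Aᵀ * A - A * Aᵀ) *ᵥ w) = - ((Aᵀ *ᵥ w) ⬝ᵥ (Aᵀ *ᵥ w)) := by
      rw [Matrix.sub_mulVec, ← Matrix.mulVec_mulVec, hAw, Matrix.mulVec_zero, zero_sub,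
        dotProduct_neg, ← Matrix.mulVec_mulVec, Matrix.dotProduct_mulVec, ← Matrix.mulVec_transpose]
    have h1 : 0 ≤ (Aᵀ *ᵥ w) ⬝ᵥ (Aᵀ *ᵥ w) := Finset.sum_nonneg fun i _ => mul_self_nonneg _
    have h2 : w ⬝ᵥ ((Aᵀ * A - A * Aᵀ) *ᵥ w) = ∑ i, D i * w i ^ 2 := by
      rw [hA]
      simp only [dotProduct, Matrix.mulVec_diagonal]
      exact Finset.sum_congr rfl fun i _ => by ring
    have h3 : ∀ i ∈ univ, 0 ≤ D i * w i ^ 2 := by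
      intro i _
      by_cases hi : p i
      · exact mul_nonneg (hp i hi).le (sq_nonneg _)
      · simp [hw, hi]
    have h4 := (Finset.sum_eq_zero_iff_of_nonneg h3).1
      (le_antisymm (by linarith) (Finset.sum_nonneg h3))
    ext ⟨i, hi⟩
    have h5 := h4 i (mem_univ i)
    have h6 := (hp i hi).ne'
    simpa [hw, hi, h6] using h5
  have := LinearMap.finrank_le_finrank_of_injective inj
  simpa [Fintype.card_subtype] using this

lemma coeff_sum_X_pow {ι : Type} [Fintype ι] (wt : ι → ℕ) (w : ℕ) :
    (∑ i, X ^ wt i : ℤ[X]).coeff w = #{i | wt i = w} := by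
  simp [coeff_X_pow, eq_comm]

lemma IsChar.unimodal {f : ℤ[X]} (hf : IsChar f) : (∀ w, 0 ≤ f.coeff w) ∧ ∃ c : ℝ,
    (∀ w : ℕ, 2 * (w : ℝ) < c → f.coeff w ≤ f.coeff (w + 1)) ∧
    (∀ w : ℕ, c < 2 * ((w + 1 : ℕ) : ℝ) → f.coeff (w + 1) ≤ f.coeff w) := by
  obtain ⟨ι, _, _, wt, E, c, s, hE, hc, hs⟩ := hf
  have hcoeff : ∀ w, f.coeff w = #{i | wt i = w + s} := by
    intro w
    rw [← coeff_sum_X_pow, ← hs, mul_comm, coeff_mul_X_pow]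
  refine ⟨fun w => by rw [hcoeff]; positivity, c - 2 * s, fun w hw => ?_, fun w hw => ?_⟩
  · rw [hcoeff, hcoeff, Nat.cast_le]
    refine card_le_of_commutator E _ hc _ _ (fun i hi => ?_) fun i j h hj => ?_
    · rw [hi]; push_cast; linarith
    · have := hE i j h; omega
  · rw [hcoeff, hcoeff, Nat.cast_le]
    refine card_le_of_commutator Eᵀ (fun i => -(c - 2 * (wt i : ℝ))) ?_ _ _ (fun i hi => ?_)
      fun i j h hj => ?_
    · rw [Matrix.transpose_transpose, ← neg_sub, hc, Matrix.diagonal_neg]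
    · rw [hi]; push_cast at *; linarith
    · have := hE j i h; omega

lemma IsChar.one : IsChar 1 :=
  ⟨Unit, inferInstance, inferInstance, fun _ => 0, 0, 0, 0, by simp, by ext; simp, by simp⟩

open Kronecker in
/-- Tensor product of two graded `sl₂` structures, with raising operator `E ⊗ 1 + 1 ⊗ E'`. -/
lemma IsChar.mul {f g : ℤ[X]} (hf : IsChar f) (hg : IsChar g) : IsChar (f * g) := by
  obtain ⟨ι, _, _, wt, E, c, s, hE, hc, hs⟩ := hf
  obtain ⟨κ, _, _, wt', E', c', s', hE', hc', hs'⟩ := hg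
  refine ⟨ι × κ, inferInstance, inferInstance, fun x => wt x.1 + wt' x.2,
    E ⊗ₖ (1 : Matrix κ κ ℝ) + (1 : Matrix ι ι ℝ) ⊗ₖ E', c + c', s + s', ?_, ?_, ?_⟩
  · rintro ⟨i, k⟩ ⟨j, l⟩ h
    simp only [Matrix.add_apply, Matrix.kronecker_apply, Matrix.one_apply] at h
    by_cases h1 : i = j
    · by_cases h2 : k = l
      · subst h1 h2
        by_cases h3 : E i i = 0
        · have : E' k k ≠ 0 := by simpa [h3] using h
          have := hE' _ _ this; omega
        · have := hE _ _ h3; omega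
      · subst h1
        have := hE' k l (by simpa [h2] using h)
        simp only; omega
    · by_cases h2 : k = l
      · subst h2
        have := hE i j (by simpa [h1] using h)
        simp only; omega
      · simp [h1, h2] at h
  · have n1 : ∀ A : Matrix ι ι ℝ, (-A) ⊗ₖ (1 : Matrix κ κ ℝ) = -(A ⊗ₖ 1) := fun A => by
      ext; simp
    have n2 : ∀ A : Matrix κ κ ℝ, (1 : Matrix ι ι ℝ) ⊗ₖ (-A) = -(1 ⊗ₖ A) := fun A => by
      ext; simp
    have key : (E ⊗ₖ (1 : Matrix κ κ ℝ) + (1 : Matrix ι ι ℝ) ⊗ₖ E')ᵀ *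
          (E ⊗ₖ (1 : Matrix κ κ ℝ) + (1 : Matrix ι ι ℝ) ⊗ₖ E') -
          (E ⊗ₖ (1 : Matrix κ κ ℝ) + (1 : Matrix ι ι ℝ) ⊗ₖ E') *
          (E ⊗ₖ (1 : Matrix κ κ ℝ) + (1 : Matrix ι ι ℝ) ⊗ₖ E')ᵀ =
        (Eᵀ * E - E * Eᵀ) ⊗ₖ (1 : Matrix κ κ ℝ) +
          (1 : Matrix ι ι ℝ) ⊗ₖ (E'ᵀ * E' - E' * E'ᵀ) := by
      simp only [Matrix.transpose_add, ← Matrix.kroneckerMap_transpose, Matrix.transpose_one,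
        mul_add, add_mul, ← Matrix.mul_kronecker_mul, one_mul, mul_one,
        sub_eq_add_neg, Matrix.add_kronecker, Matrix.kronecker_add, n1, n2]
      abel
    rw [key, hc, hc']
    ext ⟨i, k⟩ ⟨j, l⟩
    by_cases h1 : i = j <;> by_cases h2 : k = l <;>
      simp [h1, h2]
    ring
  · rw [Fintype.sum_prod_type, pow_add]
    simp only [pow_add, ← Finset.mul_sum, ← Finset.sum_mul, ← hs, ← hs']
    ring

/-! ### Gaussian binomials: the exterior powers of an irreducible representation -/

/-- Gaussian binomials count `k`-subsets of `{0, …, n-1}` by the sum of their elements, up to the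
factor `q^(0+1+⋯+(k-1))` of the smallest such subset. -/
lemma sum_pow_powersetCard (n k : ℕ) :
    ∑ S ∈ powersetCard k (range n), (X : ℤ[X]) ^ (∑ i ∈ S, i) =
      X ^ (∑ i ∈ range k, i) * qbinom n k := by
  induction n generalizing k with
  | zero => cases k <;> simp [qbinom_zero_right, qbinom_zero_succ, powersetCard_eq_empty.2 (card_empty.trans_lt (Nat.succ_pos _))]
  | succ n ih =>
    cases k with
    | zero => simp [qbinom_zero_right]
    | succ k =>
      have hn : n ∉ range n := by simp
      rw [range_add_one, powersetCard_succ_insert hn, sum_union, ih, sum_image]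
      · have : ∑ S ∈ powersetCard k (range n), (X : ℤ[X]) ^ (∑ i ∈ insert n S, i) =
            X ^ n * ∑ S ∈ powersetCard k (range n), (X : ℤ[X]) ^ (∑ i ∈ S, i) := by
          rw [mul_sum]
          refine sum_congr rfl fun S hS => ?_
          rw [sum_insert (fun h => hn ((mem_powersetCard.1 hS).1 h)), pow_add]
        rw [this, ih, qbinom_succ_succ, sum_range_succ, pow_add]
        linear_combination X ^ (∑ i ∈ range k, i) * (-qbinom_ratio n k)
      · intro S hS T hT h
        have h1 : n ∉ S := fun h => hn ((mem_powersetCard.1 hS).1 h)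
        have h2 : n ∉ T := fun h => hn ((mem_powersetCard.1 hT).1 h)
        rw [← erase_insert h1, ← erase_insert h2, h]
      · rw [disjoint_left]
        intro S hS hS'
        obtain ⟨T, _, rfl⟩ := mem_image.1 hS'
        exact hn ((mem_powersetCard.1 hS).1 (mem_insert_self _ _))

/-- The image of `S` under the transposition `(i, i+1)`. -/
def swapSet (i : ℕ) (S : Finset ℕ) : Finset ℕ := S.map (Equiv.swap i (i + 1)).toEmbedding

lemma mem_swapSet {i x : ℕ} {S : Finset ℕ} : x ∈ swapSet i S ↔ Equiv.swap i (i + 1) x ∈ S := by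
  simp [swapSet, Finset.mem_map_equiv]

lemma swapSet_swapSet (i : ℕ) (S : Finset ℕ) : swapSet i (swapSet i S) = S := by
  ext x; simp [mem_swapSet]

lemma swapSet_mem {i N k : ℕ} (hi : i ∈ range (N - 1)) {S : Finset ℕ}
    (hS : S ∈ powersetCard k (range N)) : swapSet i S ∈ powersetCard k (range N) := by
  rw [mem_powersetCard] at hS ⊢
  refine ⟨fun x hx => ?_, by rw [swapSet, card_map, hS.2]⟩
  rw [mem_swapSet] at hx
  have h := hS.1 hx
  rw [Equiv.swap_apply_def] at h
  simp only [mem_range] at *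
  grind

/-- The operator on `k`-subsets of `{0, …, N-1}` replacing the element `i` by `i+1` (and giving `0`
when that is impossible). -/
def moveMat (N k i : ℕ) : Matrix (powersetCard k (range N)) (powersetCard k (range N)) ℝ :=
  fun T S => if i ∈ S.1 ∧ i + 1 ∉ S.1 ∧ T.1 = swapSet i S.1 then 1 else 0

lemma move_tt_apply {N k i : ℕ} (j : ℕ) (hi : i ∈ range (N - 1))
    (T S : powersetCard k (range N)) :
    ((moveMat N k j)ᵀ * moveMat N k i) T S =
      if i ∈ S.1 ∧ i + 1 ∉ S.1 ∧ j ∈ T.1 ∧ j + 1 ∉ T.1 ∧ swapSet i S.1 = swapSet j T.1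
        then 1 else 0 := by
  rw [Matrix.mul_apply, Finset.sum_eq_single ⟨swapSet i S.1, swapSet_mem hi S.2⟩]
  · simp only [Matrix.transpose_apply, moveMat, ite_and]
    split_ifs <;> simp_all
  · intro R _ hR
    have : R.1 ≠ swapSet i S.1 := fun h => hR (Subtype.ext h)
    simp [moveMat, this]
  · simp

lemma move_t_apply {N k i : ℕ} (j : ℕ) (hi : i ∈ range (N - 1))
    (T S : powersetCard k (range N)) :
    (moveMat N k i * (moveMat N k j)ᵀ) T S =
      if i ∉ T.1 ∧ i + 1 ∈ T.1 ∧ j ∉ S.1 ∧ j + 1 ∈ S.1 ∧ swapSet j S.1 = swapSet i T.1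
        then 1 else 0 := by
  have e : ∀ i (A B : Finset ℕ), A = swapSet i B ↔ swapSet i A = B := fun i A B =>
    ⟨fun h => by rw [h, swapSet_swapSet], fun h => by rw [← h, swapSet_swapSet]⟩
  rw [Matrix.mul_apply, Finset.sum_eq_single ⟨swapSet i T.1, swapSet_mem hi T.2⟩]
  · have h1 : i ∈ swapSet i T.1 ↔ i + 1 ∈ T.1 := by simp [mem_swapSet]
    have h2 : i + 1 ∈ swapSet i T.1 ↔ i ∈ T.1 := by simp [mem_swapSet]
    have h3 : S.1 = swapSet j (swapSet i T.1) →
        ((j ∈ swapSet i T.1 ↔ j + 1 ∈ S.1) ∧ (j + 1 ∈ swapSet i T.1 ↔ j ∈ S.1)) := by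
      intro h; rw [h]; simp [mem_swapSet]
    simp only [Matrix.transpose_apply, moveMat, h1, h2, swapSet_swapSet]
    rw [e] at h3
    simp only [e j S.1]
    by_cases h : swapSet j S.1 = swapSet i T.1
    · have := h3 h
      simp only [this.1, this.2, h]
      split_ifs <;> simp_all
    · simp [h]
  · intro R _ hR
    have : T.1 ≠ swapSet i R.1 := fun h => hR (Subtype.ext (by simp [h, swapSet_swapSet]))
    simp [moveMat, this]
  · simp

/-- Raising `i` to `i+1` commutes with lowering `j+1` to `j` for `i ≠ j`. For adjacent `i` and `j`
both products vanish. -/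
lemma move_comm {N k i j : ℕ} (hi : i ∈ range (N - 1)) (hij : i ≠ j) :
    (moveMat N k j)ᵀ * moveMat N k i = moveMat N k i * (moveMat N k j)ᵀ := by
  ext T S
  rw [move_tt_apply j hi, move_t_apply j hi]
  obtain ⟨S, -⟩ := S
  obtain ⟨T, -⟩ := T
  congr 1
  simp only [Finset.ext_iff, mem_swapSet, eq_iff_iff, Equiv.swap_apply_def]
  constructor
  · rintro ⟨h1, h2, h3, h4, h⟩
    have e1 := h i
    have e2 := h (i + 1)
    have e3 := h j
    have e4 := h (j + 1)
    refine ⟨by grind, by grind, by grind, by grind, fun x => ?_⟩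
    have := h x
    grind
  · rintro ⟨h1, h2, h3, h4, h⟩
    have e1 := h i
    have e2 := h (i + 1)
    have e3 := h j
    have e4 := h (j + 1)
    refine ⟨by grind, by grind, by grind, by grind, fun x => ?_⟩
    have := h x
    grind

/-- For `i = j` the commutator is the difference of the occupation numbers of `i` and `i+1`. -/
lemma move_comm_self {N k i : ℕ} (hi : i ∈ range (N - 1)) :
    (moveMat N k i)ᵀ * moveMat N k i - moveMat N k i * (moveMat N k i)ᵀ =
      Matrix.diagonal fun S => (if i ∈ S.1 then 1 else 0) - (if i + 1 ∈ S.1 then 1 else 0) := by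
  have e : ∀ S T : powersetCard k (range N), swapSet i S.1 = swapSet i T.1 ↔ S = T := fun S T =>
    ⟨fun h => Subtype.ext (by rw [← swapSet_swapSet i S.1, h, swapSet_swapSet]), fun h => by rw [h]⟩
  ext T S
  rw [Matrix.sub_apply, move_tt_apply i hi, move_t_apply i hi]
  simp only [e]
  by_cases h : S = T
  · subst h
    simp only [Matrix.diagonal_apply_eq]
    by_cases h1 : i ∈ S.1 <;> by_cases h2 : i + 1 ∈ S.1 <;> simp [h1, h2]
  · simp [h, Ne.symm h]

/-- Summation by parts turning `∑ a_i (x_i - x_(i+1))` with `a_i = (i+1)(c-i)` into a sum weighted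
by `a_i - a_(i-1) = c - 2i`; the boundary term vanishes for `c = M`. -/
lemma abel_sum (c : ℝ) (x : ℕ → ℝ) (M : ℕ) :
    ∑ i ∈ range M, ((i : ℝ) + 1) * (c - i) * (x i - x (i + 1)) =
      ∑ i ∈ range (M + 1), x i * (c - 2 * i) - (M + 1) * (c - M) * x M := by
  induction M with
  | zero => simp; ring
  | succ M ih => rw [sum_range_succ, ih, sum_range_succ _ (M + 1)]; push_cast; ring

/-- The `k`-subsets of `{0, …, N-1}` index a basis of `Λ^k V`, where `V` is irreducible of
dimension `N`. In an orthonormal weight basis the raising operator of `V` sends `e_i` to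
`√((i+1)(N-1-i)) e_(i+1)`. -/
lemma isChar_qbinom (N k : ℕ) : IsChar (qbinom N k) := by
  set a : ℕ → ℝ := fun i => ((i : ℝ) + 1) * ((N : ℝ) - 1 - i) with ha
  have ha0 : ∀ i ∈ range (N - 1), 0 ≤ a i := by
    intro i hi
    have : i + 1 + 1 ≤ N := by have := mem_range.1 hi; omega
    have : (i : ℝ) + 1 + 1 ≤ N := by exact_mod_cast this
    exact mul_nonneg (by positivity) (by linarith)
  refine ⟨powersetCard k (range N), inferInstance, inferInstance, fun S => ∑ i ∈ S.1, i,
    ∑ i ∈ range (N - 1), √(a i) • moveMat N k i, k * ((N : ℝ) - 1), ∑ i ∈ range k, i, ?_, ?_, ?_⟩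
  · intro T S h
    rw [Matrix.sum_apply] at h
    obtain ⟨i, -, hi⟩ := Finset.exists_ne_zero_of_sum_ne_zero h
    rw [Matrix.smul_apply, smul_eq_mul] at hi
    have hi' := right_ne_zero_of_mul hi
    simp only [moveMat, ne_eq, ite_eq_right_iff, not_forall] at hi'
    obtain ⟨⟨h1, h2, h3⟩, -⟩ := hi'
    have h4 : T.1 = insert (i + 1) (S.1.erase i) := by
      rw [h3]; ext x
      rw [mem_swapSet, Equiv.swap_apply_def]
      grind
    simp only
    rw [h4, sum_insert (by simp [h2]), ← Finset.add_sum_erase _ _ h1]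
    ring
  · have step : (∑ i ∈ range (N - 1), √(a i) • moveMat N k i)ᵀ *
          (∑ i ∈ range (N - 1), √(a i) • moveMat N k i) -
          (∑ i ∈ range (N - 1), √(a i) • moveMat N k i) *
          (∑ i ∈ range (N - 1), √(a i) • moveMat N k i)ᵀ =
        ∑ i ∈ range (N - 1), a i • ((moveMat N k i)ᵀ * moveMat N k i -
          moveMat N k i * (moveMat N k i)ᵀ) := by
      rw [Matrix.transpose_sum, Finset.sum_mul_sum, Finset.sum_mul_sum, Finset.sum_comm,
        ← Finset.sum_sub_distrib]
      refine sum_congr rfl fun i hi => ?_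
      rw [← Finset.sum_sub_distrib, Finset.sum_eq_single_of_mem i hi]
      · rw [Matrix.transpose_smul, smul_mul_smul_comm, smul_mul_smul_comm,
          Real.mul_self_sqrt (ha0 i hi), smul_sub]
      · intro j _ hj
        rw [Matrix.transpose_smul, smul_mul_smul_comm, smul_mul_smul_comm,
          move_comm hi (Ne.symm hj), mul_comm, sub_self]
    -- Only the diagonal terms `i = j` of the double sum survive, by `move_comm`.
    rw [step, sum_congr rfl fun i hi => by rw [move_comm_self hi]]
    ext T S
    rw [Matrix.sum_apply]
    by_cases h : T = S
    · subst h
      simp only [Matrix.smul_apply, Matrix.diagonal_apply_eq, smul_eq_mul]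
      have hT := mem_powersetCard.1 T.2
      have h1 : ∑ i ∈ range N, (if i ∈ T.1 then (1 : ℝ) else 0) * ((N : ℝ) - 1 - 2 * i) =
          k * ((N : ℝ) - 1) - 2 * ((∑ i ∈ T.1, i : ℕ) : ℝ) := by
        simp only [ite_mul, one_mul, zero_mul]
        rw [← Finset.sum_filter, Finset.filter_mem_eq_inter, Finset.inter_eq_right.2 hT.1,
          Finset.sum_sub_distrib, ← Finset.mul_sum]
        simp [hT.2, mul_sub]
      rw [← h1]
      cases N with
      | zero => simp
      | succ M =>
        have := abel_sum ((M + 1 : ℕ) - 1) (fun i => if i ∈ T.1 then (1 : ℝ) else 0) M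
        rw [Nat.add_sub_cancel]
        simp only [ha]
        rw [this]
        push_cast
        ring
    · simp [h]
  · rw [← sum_pow_powersetCard, ← Finset.sum_coe_sort]

lemma isChar_qmultinom (l : List ℕ) (N : ℕ) : IsChar (qmultinom N l) := by
  induction l generalizing N with
  | nil => exact IsChar.one
  | cons a l ih => exact (isChar_qbinom N a).mul (ih _)

/-! ### Nonnegativity of the quotient -/

/-- From `(1 - q) f = (1 - q^m) Q`: expanding `Q` upwards from degree `0` shows nonnegativity of
its coefficients below the middle, expanding downwards from the top degree those above it. -/
lemma coeff_nonneg_of_mul_qint {f Q : ℤ[X]} {m : ℕ} (hm : 0 < m) (h : Q * qint m = f) (c : ℝ)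
    (hf0 : ∀ w, 0 ≤ f.coeff w)
    (hup : ∀ w : ℕ, 2 * (w : ℝ) < c → f.coeff w ≤ f.coeff (w + 1))
    (hdown : ∀ w : ℕ, c < 2 * ((w + 1 : ℕ) : ℝ) → f.coeff (w + 1) ≤ f.coeff w) (i : ℕ) :
    0 ≤ Q.coeff i := by
  have key : Q * X ^ m - Q = f * X - f := by
    rw [← h]; linear_combination -Q * qint_mul m
  have hk : ∀ i, (Q * X ^ m).coeff i - Q.coeff i = (f * X).coeff i - f.coeff i := by
    intro i; rw [← coeff_sub, key, coeff_sub]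
  by_cases hi : 2 * (i : ℝ) < c + 2
  · induction i using Nat.strong_induction_on with
    | _ i ih =>
      have h1 := hk i
      have h2 : (f * X).coeff i ≤ f.coeff i := by
        cases i with
        | zero => simpa using hf0 0
        | succ i =>
          rw [coeff_mul_X]
          exact hup i (by push_cast at hi; linarith)
      have h3 : 0 ≤ (Q * X ^ m).coeff i := by
        rw [coeff_mul_X_pow']
        split_ifs with him
        · refine ih _ (by omega) ?_
          have : ((i - m : ℕ) : ℝ) ≤ i := by exact_mod_cast Nat.sub_le _ _
          linarith
        · exact le_rfl
      linarith
  · have down : ∀ d i : ℕ, ¬ (2 * (i : ℝ) < c + 2) → Q.natDegree < i + d → 0 ≤ Q.coeff i := by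
      intro d
      induction d using Nat.strong_induction_on with
      | _ d ih =>
        intro i hi hd
        by_cases h0 : Q.natDegree < i
        · rw [coeff_eq_zero_of_natDegree_lt h0]
        have h1 := hk (i + m)
        rw [coeff_mul_X_pow] at h1
        obtain ⟨m, rfl⟩ := Nat.exists_eq_succ_of_ne_zero hm.ne'
        have h2 := hdown (i + m) (by push_cast; push Not at hi; nlinarith [Nat.cast_nonneg (α := ℝ) m])
        rw [Nat.succ_eq_add_one, ← add_assoc, coeff_mul_X] at h1
        have h3 := ih (d - 1) (by omega) (i + m + 1)
          (by push_cast; push Not at *; linarith [Nat.cast_nonneg (α := ℝ) m]) (by omega)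
        linarith
    exact down (Q.natDegree + 1) i hi (by omega)

/-- If the multiplicities of a partition `λ` of `n` together with `m` have gcd 1, then
`(1/[m]_q) · [m choose μ(λ)]_q` is a polynomial in `q` with nonnegative integer
coefficients, i.e. `[m]_q` divides the q-multinomial with quotient in `ℕ[q]`. -/
theorem stmt_8 (n m : ℕ) (hn : 0 < n) (hm : 0 < m) (P : Nat.Partition n)
    (hgcd : Nat.gcd m (Finset.gcd (Finset.range n)
      (fun j => Multiset.count (j + 1) P.parts)) = 1) :
    ∃ Q : Polynomial ℕ, Q.map (Nat.castRingHom ℤ) * (∑ i ∈ Finset.range m, Polynomial.X ^ i) =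
      qmultinom m ((List.range n).map fun j => Multiset.count (j + 1) P.parts) := by
  set l := (List.range n).map fun j => Multiset.count (j + 1) P.parts with hl
  have hdvd : qint m ∣ qmultinom m l := by
    have h1 : qint m ∣ qint 1 * qmultinom m l := by
      rw [← hgcd]
      refine dvd_qint_gcd _ _ (dvd_mul_right _ _) (dvd_qint_finset_gcd _ _ fun j hj => ?_)
      refine qint_dvd_qmultinom l m _ ?_
      rw [hl, List.mem_map]
      exact ⟨j, List.mem_range.2 (mem_range.1 hj), rfl⟩
    simpa [qint] using h1
  obtain ⟨Q, hQ⟩ := hdvd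
  rw [mul_comm] at hQ
  obtain ⟨h0, c, hup, hdown⟩ := (isChar_qmultinom l m).unimodal
  have hnn := coeff_nonneg_of_mul_qint hm hQ.symm c h0 hup hdown
  have hlift : Q ∈ lifts (Nat.castRingHom ℤ) := by
    rw [lifts_iff_coeff_lifts]
    exact fun i => ⟨(Q.coeff i).toNat, by simpa using hnn i⟩
  obtain ⟨R, hR⟩ := (mem_lifts _).1 hlift
  exact ⟨R, by rw [hR, hQ]; rfl⟩
end

section
/- Let λ be a partition of n and e_λ a nilpotent n×n matrix over F_q with Jordan block sizes λ. Then the order of the centralizer of e_λ in GL_n(F_q) equals q^{d^u} · (q−1)^{ℓ(λ)} · ∏_j [μ_j(λ)]!_q, where d^u = binom(ℓ(λ),2) + Σ_j λ′_j λ′_{j+1}, ℓ(λ) is the number of parts, λ′ is the conjugate partition, and μ_j(λ) the multiplicity of part j, and [k]!_q is the q-factorial evaluated at the prime power q. -/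
open Finset

/-!
Why the formula holds. Write `d j = dim ker e^j = λ'_1 + ⋯ + λ'_j`, and list the parts in decreasing
order as `a_0 ≥ a_1 ≥ ⋯ ≥ a_{ℓ-1}`. Call `(v_i)` a Jordan tuple if `e^{a_i} v_i = 0` for all `i` and
the vectors `e^{a_i - 1} v_i` are linearly independent. The vectors `e^k v_i` with `k < a_i` are
then linearly independent (`IsJordanTuple.linearIndependent`), hence a basis, since `∑ a_i = n`.
An automorphism commuting with `e` is thus determined by the image of one fixed Jordan tuple, and
that image may be any Jordan tuple: the centralizer and the set of Jordan tuples are equinumerous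
(`card_centralizer_eq`) as soon as a Jordan tuple exists.

Jordan tuples are counted one vector at a time. The subspaces `e^{a_i - 1} (ker e^{a_i})` increase
with `i`, so the span of the first `i` vectors `e^{a_t - 1} v_t` lies in the next such subspace;
its preimage under `e^{a_i - 1}` has dimension `d (a_i - 1) + i` and is what `v_i` must avoid inside
`ker e^{a_i}`. The count is `∏ i, (q^{d(a_i)} - q^{d(a_i - 1) + i})` (`card_flag_tuples`). In
particular it is positive, so Jordan tuples exist and no normal form theorem is needed.

Finally the `i`-th factor is `q^{d(a_i - 1)} q^i (q^{λ'_{a_i} - i} - 1)`. The exponents `i` add up to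
`ℓ.choose 2`, the exponents `d (a_i - 1)` to `∑ λ'_j λ'_{j+1}` (`sum_partial_sums`), and as `i` runs
over the indices with `a_i = j` the number `λ'_j - i` runs over `1, …, μ_j` (`prod_card_ge_sub`),
which yields the factorials.
-/

/-! ### Counting tuples along an increasing flag -/

section Count
variable {F V : Type*} [Field F] [AddCommGroup V] [Module F V] [Finite V]

theorem finrank_comap_of_le_range {φ : V →ₗ[F] V} {W : Submodule F V} (hW : W ≤ LinearMap.range φ) :
    Module.finrank F (W.comap φ) = Module.finrank F (LinearMap.ker φ) + Module.finrank F W := by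
  have : Module.Finite F V := Module.Finite.of_finite
  have hk : LinearMap.ker φ ≤ W.comap φ := fun x hx => by
    simp only [Submodule.mem_comap, LinearMap.mem_ker.mp hx, W.zero_mem]
  have h := LinearMap.finrank_range_add_finrank_ker (φ.domRestrict (W.comap φ))
  have h1 : LinearMap.range (φ.domRestrict (W.comap φ)) = W := by
    rw [LinearMap.range_domRestrict, Submodule.map_comap_eq, inf_eq_right.mpr hW]
  have h2 : LinearMap.ker (φ.domRestrict (W.comap φ)) =
      (LinearMap.ker φ).comap (W.comap φ).subtype := by
    ext x; simp [LinearMap.domRestrict]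
  rw [h1, h2, (Submodule.comapSubtypeEquivOfLe hk).finrank_eq] at h
  omega

/-- The number of ways to extend a tuple whose images span `W` by one more vector of `K`, keeping
the images independent. The hypotheses make the whole preimage of `W` lie in `K`. -/
theorem card_extensions [Fintype F] {φ : V →ₗ[F] V} {K W : Submodule F V} (hφ : LinearMap.ker φ ≤ K)
    (hW : W ≤ K.map φ) :
    Nat.card {x : V // x ∈ K ∧ φ x ∉ W} =
      Fintype.card F ^ Module.finrank F K -
        Fintype.card F ^ (Module.finrank F (LinearMap.ker φ) + Module.finrank F W) := by
  have : Module.Finite F V := Module.Finite.of_finite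
  have hle : W.comap φ ≤ K := fun x hx => by
    obtain ⟨y, hy, hyx⟩ := hW hx
    have : x - y ∈ K := hφ (by simp [hyx])
    simpa using K.add_mem this hy
  rw [← finrank_comap_of_le_range (hW.trans (LinearMap.map_le_range)), ← Nat.card_eq_fintype_card,
    ← Module.natCard_eq_pow_finrank, ← Module.natCard_eq_pow_finrank]
  exact Set.ncard_sdiff (s := (W.comap φ : Set V)) (t := (K : Set V)) hle

/-- Choosing the `v i` successively, the span of the earlier images always lies in
`(K i).map (φ i)` by monotonicity, so the number of choices at each step is independent of the
earlier ones. A factor that truncates to zero is correct: no tuple exists then. -/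
theorem card_flag_tuples [Fintype F] {l : ℕ} (φ : Fin l → V →ₗ[F] V) (K : Fin l → Submodule F V)
    (hφ : ∀ i, LinearMap.ker (φ i) ≤ K i) (hmono : Monotone fun i => (K i).map (φ i)) :
    Nat.card {v : Fin l → V // (∀ i, v i ∈ K i) ∧ LinearIndependent F fun i => φ i (v i)} =
      ∏ i : Fin l, (Fintype.card F ^ Module.finrank F (K i) -
        Fintype.card F ^ (Module.finrank F (LinearMap.ker (φ i)) + i)) := by
  induction l with
  | zero =>
    have : Unique {v : Fin 0 → V // (∀ i, v i ∈ K i) ∧ LinearIndependent F fun i => φ i (v i)} :=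
      { default := ⟨Fin.elim0, fun i => i.elim0, linearIndependent_empty_type⟩
        uniq := fun a => Subsingleton.elim _ _ }
    simp
  | succ l ih =>
    let T := {v : Fin l → V // (∀ i, v i ∈ K i.castSucc) ∧
      LinearIndependent F fun i => φ i.castSucc (v i)}
    -- split off the last vector
    let Φ : {v : Fin (l + 1) → V // (∀ i, v i ∈ K i) ∧ LinearIndependent F fun i => φ i (v i)} ≃
        Σ v : T, {x : V // x ∈ K (Fin.last l) ∧ φ (Fin.last l) x ∉
          Submodule.span F (Set.range fun i => φ i.castSucc (v.1 i))} :=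
      { toFun := fun v =>
          have h := linearIndependent_finSucc'.mp v.2.2
          ⟨⟨fun i => v.1 i.castSucc, fun i => v.2.1 _, h.1⟩, ⟨v.1 (Fin.last l), v.2.1 _, h.2⟩⟩
        invFun := fun p => ⟨Fin.snoc p.1.1 p.2.1, by
          constructor
          · intro i
            induction i using Fin.lastCases with
            | last => simpa using p.2.2.1
            | cast i => simpa using p.1.2.1 i
          · rw [linearIndependent_finSucc']
            have hinit : (Fin.init fun i => φ i
                ((Fin.snoc p.1.1 p.2.1 : Fin (l + 1) → V) i) : Fin l → V) =
                fun i => φ i.castSucc (p.1.1 i) := by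
              funext i; simp [Fin.init]
            rw [hinit]
            exact ⟨p.1.2.2, by simpa using p.2.2.2⟩⟩
        left_inv := fun v => by
          apply Subtype.ext
          funext i
          induction i using Fin.lastCases <;> simp
        right_inv := fun p => by
          rcases p with ⟨⟨v, hv⟩, ⟨x, hx⟩⟩
          have hv' : (fun i : Fin l => (Fin.snoc v x : Fin (l + 1) → V) i.castSucc) = v := by
            funext i; simp
          refine Sigma.subtype_ext (Subtype.ext hv') ?_
          simp }
    have hfib (v : T) : Nat.card {x : V // x ∈ K (Fin.last l) ∧ φ (Fin.last l) x ∉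
          Submodule.span F (Set.range fun i => φ i.castSucc (v.1 i))} =
        Fintype.card F ^ Module.finrank F (K (Fin.last l)) -
          Fintype.card F ^ (Module.finrank F (LinearMap.ker (φ (Fin.last l))) + l) := by
      rw [card_extensions (hφ _), finrank_span_eq_card v.2.2, Fintype.card_fin]
      rw [Submodule.span_le]
      rintro _ ⟨i, rfl⟩
      exact hmono (Fin.le_last i.castSucc) (Submodule.mem_map_of_mem (v.2.1 i))
    have : Fintype T := Fintype.ofFinite T
    rw [Nat.card_congr Φ, Nat.card_sigma, Finset.sum_congr rfl fun v _ => hfib v,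
      Finset.sum_const, Finset.card_univ, ← Nat.card_eq_fintype_card (α := T),
      ih (fun i => φ i.castSucc) (fun i => K i.castSucc) (fun i => hφ _)
        (fun i j hij => hmono (Fin.castSucc_le_castSucc_iff.mpr hij)), Fin.prod_univ_castSucc]
    simp
end Count

/-! ### Jordan tuples and the centralizer -/

section Jordan
variable {F V ι : Type*} [Field F] [AddCommGroup V] [Module F V]

/-- A tuple of generators of Jordan chains of lengths `a i` whose end vectors `E ^ (a i - 1) (v i)`
are linearly independent. Only positive `a i` are meaningful: `a i = 0` forces `v i = 0`, which
contradicts independence. -/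
def IsJordanTuple (E : Module.End F V) (a : ι → ℕ) (v : ι → V) : Prop :=
  (∀ i, v i ∈ LinearMap.ker (E ^ a i)) ∧ LinearIndependent F fun i => (E ^ (a i - 1)) (v i)

/-- The full Jordan chains are independent because their end vectors are: in a relation, a vector
`E ^ k (v i)` has height `a i - k`; if `m + 1` bounds the heights that occur, then applying `E ^ m`
leaves a relation between end vectors only, which kills the coefficients at height `m + 1`. -/
theorem IsJordanTuple.linearIndependent [Fintype ι] {E : Module.End F V} {a : ι → ℕ} {v : ι → V}
    (hv : IsJordanTuple E a v) :
    LinearIndependent F fun x : Σ i, Fin (a i) => (E ^ (x.2 : ℕ)) (v x.1) := by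
  classical
  rw [Fintype.linearIndependent_iff]
  suffices H : ∀ m : ℕ, ∀ c : (Σ i, Fin (a i)) → F,
      (∀ x, c x ≠ 0 → a x.1 ≤ x.2 + m) → ∑ x, c x • (E ^ (x.2 : ℕ)) (v x.1) = 0 → ∀ x, c x = 0 by
    intro c hc
    refine H (∑ i, a i) c (fun x _ => ?_) hc
    exact (Finset.single_le_sum (f := a) (fun _ _ => Nat.zero_le _) (Finset.mem_univ x.1)).trans
      (Nat.le_add_left _ _)
  intro m
  induction m with
  | zero =>
    intro c hc _ x
    by_contra h
    have := hc x h
    have := x.2.2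
    omega
  | succ m ih =>
    intro c hc hsum
    have key : ∀ x : Σ i, Fin (a i), c x ≠ 0 → a x.1 ≤ x.2 + m := by
      have h0 := congrArg (E ^ m) hsum
      rw [map_sum, map_zero, ← Finset.univ_sigma_univ, Finset.sum_sigma] at h0
      have hterm : ∀ i, ∑ k : Fin (a i), (E ^ m) (c ⟨i, k⟩ • (E ^ (k : ℕ)) (v i)) =
          (if h : m < a i then c ⟨i, ⟨a i - 1 - m, by omega⟩⟩ else 0) • (E ^ (a i - 1)) (v i) := by
        intro i
        have hz : ∀ k : Fin (a i), (k : ℕ) ≠ a i - 1 - m ∨ a i ≤ m →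
            (E ^ m) (c ⟨i, k⟩ • (E ^ (k : ℕ)) (v i)) = 0 := by
          intro k hk
          by_cases hck : c ⟨i, k⟩ = 0
          · simp [hck]
          have h1 := hc ⟨i, k⟩ hck
          have h2 := k.2
          simp only at h1
          have h3 : m + k = (m + k - a i) + a i := by omega
          have h4 := LinearMap.mem_ker.mp (hv.1 i)
          rw [map_smul, ← Module.End.mul_apply, ← pow_add, h3, pow_add, Module.End.mul_apply, h4,
            map_zero, smul_zero]
        split_ifs with h
        · rw [Finset.sum_eq_single ⟨a i - 1 - m, by omega⟩ (fun k _ hk => hz k (Or.inl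
            fun h => hk (Fin.ext h))) (by simp), map_smul, ← Module.End.mul_apply, ← pow_add]
          congr 3
          simp only; omega
        · rw [zero_smul]
          exact Finset.sum_eq_zero fun k _ => hz k (Or.inr (by omega))
      rw [Finset.sum_congr rfl fun i _ => hterm i] at h0
      have h1 := Fintype.linearIndependent_iff.mp hv.2 _ h0
      intro x hx
      by_contra hlt
      have h2 := hc x hx
      have h3 := h1 x.1
      rw [dif_pos (by omega)] at h3
      apply hx
      rw [← h3]
      congr 1
      exact Sigma.ext rfl (heq_of_eq (Fin.ext (by simp only; omega)))
    exact ih c key hsum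

/-- The basis `E ^ k (v i)`, `k < a i`, attached to a Jordan tuple whose chain lengths add up to the
dimension. -/
noncomputable def IsJordanTuple.basis [Fintype ι] [Module.Finite F V] {E : Module.End F V}
    {a : ι → ℕ} {v : ι → V} (hv : IsJordanTuple E a v) (ha : ∑ i, a i = Module.finrank F V) :
    Module.Basis (Σ i, Fin (a i)) F V :=
  Module.Basis.mk hv.linearIndependent
    (hv.linearIndependent.span_eq_top_of_card_eq_finrank' (by simp [ha])).ge

theorem IsJordanTuple.basis_apply [Fintype ι] [Module.Finite F V] {E : Module.End F V}
    {a : ι → ℕ} {v : ι → V} (hv : IsJordanTuple E a v) (ha : ∑ i, a i = Module.finrank F V)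
    (x : Σ i, Fin (a i)) : hv.basis ha x = (E ^ (x.2 : ℕ)) (v x.1) := by
  simp [IsJordanTuple.basis]

theorem pow_apply_of_commute {E : Module.End F V} {g : Module.End F V} (hg : g * E = E * g)
    (k : ℕ) (x : V) :
    (E ^ k) (g x) = g ((E ^ k) x) := by
  have := (show Commute g E from hg).pow_right k
  exact (LinearMap.congr_fun this.eq x).symm

theorem IsJordanTuple.map_unit {E : Module.End F V}
    {a : ι → ℕ} {v : ι → V} (hv : IsJordanTuple E a v) (g : (Module.End F V)ˣ)
    (hg : g.val * E = E * g.val) : IsJordanTuple E a fun i => g.val (v i) := by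
  refine ⟨fun i => ?_, ?_⟩
  · rw [LinearMap.mem_ker, pow_apply_of_commute hg, LinearMap.mem_ker.mp (hv.1 i), map_zero]
  · simp_rw [pow_apply_of_commute hg]
    refine hv.2.map' g.val (LinearMap.ker_eq_bot.mpr fun x y hxy => ?_)
    have := congrArg g.inv hxy
    simpa [← Module.End.mul_apply] using this

/-- Evaluation at a fixed Jordan tuple is a bijection from the automorphisms commuting with `E` to
the Jordan tuples. -/
theorem card_centralizer_eq [Fintype ι] [Module.Finite F V] {E : Module.End F V}
    {a : ι → ℕ} {v : ι → V} (hv : IsJordanTuple E a v) (ha : ∑ i, a i = Module.finrank F V) :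
    Nat.card {g : (Module.End F V)ˣ // g.val * E = E * g.val} =
      Nat.card {w : ι → V // IsJordanTuple E a w} := by
  refine Nat.card_congr (Equiv.ofBijective
    (fun g => ⟨fun i => g.1.val (v i), hv.map_unit g.1 g.2⟩) ⟨fun g h hgh => ?_, fun w => ?_⟩)
  · apply Subtype.ext
    apply Units.ext
    refine (hv.basis ha).ext fun x => ?_
    have := congrFun (congrArg Subtype.val hgh) x.1
    simp only at this
    rw [hv.basis_apply, ← pow_apply_of_commute g.2, ← pow_apply_of_commute h.2, this]
  · obtain ⟨w, hw⟩ := w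
    let G : V ≃ₗ[F] V := (hv.basis ha).equiv (hw.basis ha) (Equiv.refl _)
    -- for `k ≥ a i` both sides vanish; this is what makes `G` commute with `E` at chain ends
    have hG : ∀ i k, G ((E ^ k) (v i)) = (E ^ k) (w i) := by
      intro i k
      by_cases hk : k < a i
      · have := (hv.basis ha).equiv_apply ⟨i, ⟨k, hk⟩⟩ (hw.basis ha) (Equiv.refl _)
        simpa [IsJordanTuple.basis_apply] using this
      · have h3 : k = (k - a i) + a i := by omega
        rw [h3, pow_add, Module.End.mul_apply, Module.End.mul_apply, LinearMap.mem_ker.mp (hv.1 i),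
          LinearMap.mem_ker.mp (hw.1 i)]
        simp
    refine ⟨⟨LinearMap.GeneralLinearGroup.generalLinearEquiv F V |>.symm G, ?_⟩, ?_⟩
    · refine (hv.basis ha).ext fun x => ?_
      rw [hv.basis_apply]
      change G (E ((E ^ (x.2 : ℕ)) (v x.1))) = E (G ((E ^ (x.2 : ℕ)) (v x.1)))
      rw [hG, ← Module.End.mul_apply, ← Module.End.mul_apply, ← pow_succ', hG]
    · apply Subtype.ext
      funext i
      exact hG i 0
end Jordan

/-! ### Evaluation of the product -/

section Combinatorics

theorem lt_card_ge {l : ℕ} {a : Fin l → ℕ} (ha : Antitone a) (i : Fin l) :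
    (i : ℕ) < #{t | a i ≤ a t} := by
  have h : Finset.Iic i ⊆ ({t | a i ≤ a t} : Finset (Fin l)) := fun t ht => by
    simpa using ha (Finset.mem_Iic.mp ht)
  have := Finset.card_le_card h
  rw [Fin.card_Iic] at this
  omega

theorem card_ge_eq_add {l : ℕ} (a : Fin l → ℕ) (j : ℕ) :
    #{t | j ≤ a t} = #{t | j + 1 ≤ a t} + #{t | a t = j} := by
  rw [← Finset.card_union_of_disjoint]
  · congr 1
    ext t
    simp only [Finset.mem_filter, Finset.mem_univ, true_and, Finset.mem_union]
    omega
  · rw [Finset.disjoint_filter]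
    intro t _ h
    omega

/-- On the block of indices `i` with `a i = j`, which starts at `#{t | j + 1 ≤ a t}` since `a` is
antitone, the map `i ↦ #{t | j ≤ a t} - i` is a bijection onto `1, …, #{t | a t = j}`. -/
theorem prod_card_ge_sub {l n : ℕ} {a : Fin l → ℕ} (ha : Antitone a)
    (han : ∀ i, a i ∈ Finset.Icc 1 n) (f : ℕ → ℕ) :
    ∏ i, f (#{t | a i ≤ a t} - i) =
      ∏ j ∈ Finset.Icc 1 n, ∏ k ∈ Finset.Icc 1 #{t | a t = j}, f k := by
  rw [← Finset.prod_fiberwise_of_maps_to (g := a) (t := Finset.Icc 1 n) fun i _ => han i]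
  refine Finset.prod_congr rfl fun j _ => ?_
  have hmaps : ∀ i ∈ ({t | a t = j} : Finset (Fin l)),
      #{t | a i ≤ a t} - (i : ℕ) ∈ Finset.Icc 1 #{t | a t = j} := by
    intro i hi
    have hi : a i = j := by simpa using hi
    have h1 := lt_card_ge ha i
    have h2 := card_ge_eq_add a j
    have h3 : ({t | j + 1 ≤ a t} : Finset (Fin l)) ⊆ Finset.Iio i := fun t ht => by
      rw [Finset.mem_Iio]
      by_contra hlt
      have := ha (not_lt.mp hlt)
      simp at ht
      omega
    have h4 := Finset.card_le_card h3
    rw [Fin.card_Iio] at h4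
    rw [hi] at h1 ⊢
    rw [Finset.mem_Icc]
    omega
  have hinj : Set.InjOn (fun i : Fin l => #{t | a i ≤ a t} - (i : ℕ))
      (({t | a t = j} : Finset (Fin l)) : Set (Fin l)) := by
    intro i hi i' hi' h
    have hi : a i = j := by simpa using hi
    have hi' : a i' = j := by simpa using hi'
    have h1 := lt_card_ge ha i
    have h2 := lt_card_ge ha i'
    simp only [hi, hi'] at h h1 h2
    exact Fin.ext (by omega)
  refine Finset.prod_nbij (fun i : Fin l => #{t | a i ≤ a t} - (i : ℕ)) hmaps hinj ?_
    fun _ _ => rfl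
  exact Finset.surjOn_of_injOn_of_card_le _ hmaps hinj (by simp)

theorem sum_partial_sums {l n : ℕ} {a : Fin l → ℕ} (han : ∀ i, a i ∈ Finset.Icc 1 n) (c : ℕ → ℕ) :
    ∑ i, ∑ k ∈ Finset.Icc 1 (a i - 1), c k =
      ∑ j ∈ Finset.Icc 1 n, c j * #{t | j + 1 ≤ a t} := by
  have h : ∀ i, ∑ k ∈ Finset.Icc 1 (a i - 1), c k =
      ∑ k ∈ Finset.Icc 1 n, if k + 1 ≤ a i then c k else 0 := by
    intro i
    rw [← Finset.sum_filter]
    refine Finset.sum_congr ?_ fun _ _ => rfl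
    ext k
    have := Finset.mem_Icc.mp (han i)
    simp only [Finset.mem_Icc, Finset.mem_filter]
    omega
  rw [Finset.sum_congr rfl fun i _ => h i, Finset.sum_comm]
  refine Finset.sum_congr rfl fun j _ => ?_
  rw [← Finset.sum_filter, Finset.sum_const, smul_eq_mul, mul_comm]

theorem sum_card_ge_le {l : ℕ} (a : Fin l → ℕ) (j : ℕ) :
    ∑ k ∈ Finset.Icc 1 j, #{t | k ≤ a t} ≤ ∑ i, a i := by
  simp_rw [Finset.card_filter]
  rw [Finset.sum_comm]
  refine Finset.sum_le_sum fun i _ => ?_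
  rw [← Finset.card_filter]
  calc _ ≤ #(Finset.Icc 1 (a i)) := Finset.card_le_card fun k hk => by
        simp only [Finset.mem_filter, Finset.mem_Icc] at hk ⊢
        omega
    _ = a i := by simp

theorem pow_sub_pow_eq {q d c i : ℕ} (hq : 1 ≤ q) (hi : i < c) :
    q ^ (d + c) - q ^ (d + i) = q ^ d * q ^ i * ((q - 1) * ∑ k ∈ Finset.range (c - i), q ^ k) := by
  have h1 := geom_sum_mul_add (q - 1) (c - i)
  rw [Nat.sub_add_cancel hq] at h1
  have h2 : d + c = d + i + (c - i) := by omega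
  rw [mul_comm (q - 1), h2, pow_add _ (d + i), ← h1, pow_add]
  rw [mul_add, mul_one, Nat.add_sub_cancel]

theorem prod_count_eq {l n q : ℕ} (hq : 1 ≤ q) {a : Fin l → ℕ} (ha : Antitone a)
    (han : ∀ i, a i ∈ Finset.Icc 1 n) :
    ∏ i : Fin l, (q ^ (∑ k ∈ Finset.Icc 1 (a i), #{t | k ≤ a t}) -
        q ^ ((∑ k ∈ Finset.Icc 1 (a i - 1), #{t | k ≤ a t}) + i)) =
      q ^ (l.choose 2 + ∑ j ∈ Finset.Icc 1 n, #{t | j ≤ a t} * #{t | j + 1 ≤ a t}) *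
        (q - 1) ^ l *
        ∏ j ∈ Finset.Icc 1 n, ∏ k ∈ Finset.Icc 1 #{t | a t = j}, ∑ i ∈ Finset.range k, q ^ i := by
  have hfac : ∀ i : Fin l, q ^ (∑ k ∈ Finset.Icc 1 (a i), #{t | k ≤ a t}) -
        q ^ ((∑ k ∈ Finset.Icc 1 (a i - 1), #{t | k ≤ a t}) + i) =
      q ^ (∑ k ∈ Finset.Icc 1 (a i - 1), #{t | k ≤ a t}) * q ^ (i : ℕ) *
        ((q - 1) * ∑ k ∈ Finset.range (#{t | a i ≤ a t} - i), q ^ k) := by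
    intro i
    rw [← pow_sub_pow_eq hq (lt_card_ge ha i)]
    congr 2
    have h1 : a i = a i - 1 + 1 := by have := Finset.mem_Icc.mp (han i); omega
    conv_lhs => rw [h1]
    rw [Finset.sum_Icc_succ_top (by omega), ← h1]
  rw [Finset.prod_congr rfl fun i _ => hfac i]
  simp only [Finset.prod_mul_distrib, Finset.prod_pow_eq_pow_sum, Finset.prod_const,
    Finset.card_univ, Fintype.card_fin]
  rw [sum_partial_sums han fun k => #{t | k ≤ a t},
    prod_card_ge_sub ha han fun m => ∑ k ∈ Finset.range m, q ^ k,
    Fin.sum_univ_eq_sum_range (fun i => i),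
    Finset.sum_range_id, ← Nat.choose_two_right, pow_add]
  ring

theorem exists_antitone_enumeration (s : Multiset ℕ) :
    ∃ a : Fin (Multiset.card s) → ℕ, Antitone a ∧ Multiset.map a Finset.univ.val = s := by
  have hlen : (s.sort (· ≥ ·)).length = Multiset.card s := Multiset.length_sort _
  refine ⟨fun i => (s.sort (· ≥ ·)).get (i.cast hlen.symm), fun i j hij => ?_, ?_⟩
  · exact (Multiset.pairwise_sort s (· ≥ ·)).sortedGE.antitone_get (by simpa using hij)
  · conv_rhs => rw [← Multiset.sort_eq s (· ≥ ·)]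
    rw [Fin.univ_val_map]
    congr 1
    apply List.ext_get <;> simp

end Combinatorics

/-! ### The centralizer of a nilpotent matrix -/

/-- The order of the centralizer in `GL_n(F_q)` of a nilpotent matrix with Jordan type `λ`
(encoded by the condition `rank(e^j) = n − (λ′_1 + ⋯ + λ′_j)` for all `j`) equals
`q^{d^u} (q−1)^{ℓ(λ)} ∏_j [μ_j(λ)]!_q` with `d^u = binom(ℓ(λ),2) + Σ_j λ′_j λ′_{j+1}`. -/
theorem stmt_11 (n : ℕ) (hn : 0 < n) (F : Type) [Field F] [Fintype F] [DecidableEq F]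
    (P : Nat.Partition n) (e : Matrix (Fin n) (Fin n) F)
    (hJordan : ∀ j : ℕ, (e ^ j).rank =
      n - ∑ i ∈ Finset.Icc 1 j, Multiset.card (P.parts.filter (fun p => i ≤ p))) :
    (fun (q : ℕ) (conj : ℕ → ℕ) =>
      Nat.card {g : (Matrix (Fin n) (Fin n) F)ˣ // g.val * e = e * g.val} =
        q ^ (Nat.choose (Multiset.card P.parts) 2 +
              ∑ j ∈ Finset.Icc 1 n, conj j * conj (j + 1)) *
          (q - 1) ^ (Multiset.card P.parts) *
          ∏ j ∈ Finset.Icc 1 n,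
            ∏ k ∈ Finset.Icc 1 (Multiset.count j P.parts), ∑ i ∈ Finset.range k, q ^ i)
      (Fintype.card F)
      (fun j => Multiset.card (P.parts.filter (fun p => j ≤ p))) := by
  obtain ⟨a, ha, haP⟩ := exists_antitone_enumeration P.parts
  have hconj : ∀ j, Multiset.card (P.parts.filter (fun p => j ≤ p)) = #{t | j ≤ a t} := by
    intro j
    conv_lhs => rw [← haP]
    rw [Multiset.filter_map, Multiset.card_map]
    rfl
  have hcount : ∀ j, Multiset.count j P.parts = #{t | a t = j} := by
    intro j
    conv_lhs => rw [← haP]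
    rw [Multiset.count_map]
    simp only [eq_comm (a := j)]
    rfl
  have hsum : ∑ i, a i = n := by
    exact (congrArg Multiset.sum haP).trans P.parts_sum
  have han : ∀ i, a i ∈ Finset.Icc 1 n := by
    intro i
    have hmem : a i ∈ P.parts := by
      have := Multiset.mem_map_of_mem a (Finset.mem_univ_val i)
      rwa [haP] at this
    exact Finset.mem_Icc.mpr ⟨P.parts_pos hmem, hsum ▸
      Finset.single_le_sum (f := a) (fun _ _ => Nat.zero_le _) (Finset.mem_univ i)⟩
  have hq : 2 ≤ Fintype.card F := Fintype.one_lt_card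
  simp only [hconj, hcount] at hJordan ⊢
  let E : Module.End F (Fin n → F) := Matrix.toLinAlgEquiv' e
  have hker : ∀ j, Module.finrank F (LinearMap.ker (E ^ j)) =
      ∑ k ∈ Finset.Icc 1 j, #{t | k ≤ a t} := by
    intro j
    have h1 := LinearMap.finrank_range_add_finrank_ker (E ^ j)
    have h2 : Module.finrank F (LinearMap.range (E ^ j)) = (e ^ j).rank := by
      rw [← map_pow]
      rfl
    -- ensures that the natural subtraction in `hJordan` does not truncate
    have h3 := sum_card_ge_le a j
    rw [h2, hJordan, Module.finrank_fin_fun] at h1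
    omega
  have hcard := card_flag_tuples (fun i => E ^ (a i - 1)) (fun i => LinearMap.ker (E ^ a i))
    (fun i x hx => by
      have h1 : a i = 1 + (a i - 1) := by have := Finset.mem_Icc.mp (han i); omega
      rw [LinearMap.mem_ker] at hx ⊢
      rw [h1, pow_add, Module.End.mul_apply, hx, map_zero])
    (by
      rintro i j hij _ ⟨x, hx, rfl⟩
      have h0 := ha hij
      have h1 := Finset.mem_Icc.mp (han i)
      have h2 := Finset.mem_Icc.mp (han j)
      refine ⟨(E ^ (a i - a j)) x, ?_, ?_⟩
      · rw [SetLike.mem_coe, LinearMap.mem_ker, ← Module.End.mul_apply, ← pow_add,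
          Nat.add_sub_cancel' h0]
        exact hx
      · rw [← Module.End.mul_apply, ← pow_add]
        congr 2
        omega)
  simp only [hker] at hcard
  rw [prod_count_eq (by omega) ha han] at hcard
  have hpos : 0 < Nat.card {v : Fin P.parts.card → Fin n → F // IsJordanTuple E a v} := by
    refine lt_of_lt_of_eq ?_ hcard.symm
    refine Nat.mul_pos (Nat.mul_pos (Nat.pow_pos (by omega)) (Nat.pow_pos (by omega))) ?_
    refine Finset.prod_pos fun j _ => Finset.prod_pos fun k hk => ?_
    exact Finset.sum_pos (fun i _ => Nat.pow_pos (by omega))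
      (Finset.nonempty_range_iff.mpr (by have := Finset.mem_Icc.mp hk; omega))
  obtain ⟨⟨v, hv⟩⟩ := (Nat.card_pos_iff.mp hpos).1
  rw [← hcard]
  refine Eq.trans ?_ (card_centralizer_eq hv (by rw [hsum, Module.finrank_fin_fun]))
  refine Nat.card_congr ((Units.mapEquiv
    (Matrix.toLinAlgEquiv' (R := F) (n := Fin n)).toRingEquiv.toMulEquiv).toEquiv.subtypeEquiv
      fun g => ?_)
  change _ ↔ Matrix.toLinAlgEquiv' g.val * Matrix.toLinAlgEquiv' e =
    Matrix.toLinAlgEquiv' e * Matrix.toLinAlgEquiv' g.val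
  rw [← map_mul, ← map_mul, Matrix.toLinAlgEquiv'.injective.eq_iff]
end
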